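/- Let γ > 0, 1 < α < 2, p > 1, a > 0, b > 0, and let β ∈ [α/2, α). Suppose w ∈ C¹([0,∞)), w ≢ 0, the function t ↦ ₀I_t^{2−α}(w(s) − w'(0)s − w(0)) is in AC²([0,T]) for every T > 0, and for almost every t ≥ 0 one has (₀D_t^α w)(t) + a·w(t) ≥ b·(₀I_t^γ (|w|^p))(t). If α + γ ≤ 2 and w'(0) > 0, then liminf_{t→+∞} t^{α−β−1}·(₀I_t^β w)(t) > 0. -/

import Mathlib

open MeasureTheory Filter

/-- Riemann–Liouville fractional integral of order `σ` based at `0`: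
`(₀I_t^σ f)(t) = (1/Γ(σ)) ∫₀ᵗ (t−s)^{σ−1} f(s) ds`. -/
noncomputable def rlInt (σ : ℝ) (f : ℝ → ℝ) (t : ℝ) : ℝ :=
  (1 / Real.Gamma σ) * ∫ s in (0:ℝ)..t, (t - s) ^ (σ - 1) * f s

/-- The function whose second derivative is the (left) Caputo derivative of order `α ∈ (1,2]`:
for `α < 2` it is `₀I_t^{2−α}(w(s) − w'(0)·s − w(0))`, and for `α = 2` it is `w` itself. -/
noncomputable def capKernel (α : ℝ) (w : ℝ → ℝ) : ℝ → ℝ :=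
  if α = 2 then w else rlInt (2 - α) (fun s => w s - deriv w 0 * s - w 0)

/-- Left Caputo fractional derivative of order `α ∈ (1,2]`:
`(₀D_t^α w)(t) = (d²/dt²)[ ₀I_t^{2−α}(w(s) − w'(0)s − w(0)) ](t)` (second derivative of `w` when `α = 2`). -/
noncomputable def caputoD (α : ℝ) (w : ℝ → ℝ) : ℝ → ℝ :=
  deriv (deriv (capKernel α w))

/-- `g ∈ AC²([0,T])`: `g` is differentiable on `[0,T]`, its second derivative is integrable,
and `g'` is the integral of `g''` (i.e. `g'` is absolutely continuous). -/
def AC2On (g : ℝ → ℝ) (T : ℝ) : Prop :=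
  (∀ t ∈ Set.Icc (0:ℝ) T, DifferentiableAt ℝ g t) ∧
  IntervalIntegrable (deriv (deriv g)) volume 0 T ∧
  ∀ t ∈ Set.Icc (0:ℝ) T, deriv g t = deriv g 0 + ∫ s in (0:ℝ)..t, deriv (deriv g) s

/-!
With `h` the Caputo derivative of `w`, the fractional Taylor formula `w = w(0) + w'(0) s + I^α h`
and variation of constants for `h = -a w + (h + a w)` express `I^β w` through Mittag-Leffler
functions. The forcing term `h + a w` is nonnegative, so it may be dropped once `E_{α,σ}(-x) ≥ 0`
is known for `σ ≥ 3 α / 2`; here `σ = β + α`. This leaves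
`w(0) t^β E_{α,β+1}(-a t^α) + w'(0) t^(β+1) E_{α,β+2}(-a t^α)`, whose first term decays too fast
to matter, while the second one is bounded below by testing the kernel
`s^(β+α-1) E_{α,β+α}(-x s^α) ≥ 0` against the nonnegative function `s^(1-α) - 1` on `(0, 1]`.

Positivity and decay of `E_{α,σ}(-x)` both follow from `|E_{μ,σ}(z)| ≤ 1 / Γ(σ)` for `Re z ≤ 0`,
where `μ = α / 2 ≤ 1` and `σ ≥ μ`, on taking real and imaginary parts at `z = i √x`. That bound is
the limit of a statement about power series: `A = (1 - X)^μ` has nonpositive coefficients beyond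
the constant one, `B = (1 - X)^(μ-σ)` has nonnegative ones, and therefore the coefficients of
`(A - z)⁻¹ B` are dominated by those of `A⁻¹ B = (1 - X)^(-σ)`.
-/

open Set Topology Asymptotics

section Multichoose

lemma multichoose_mul_factorial (σ : ℝ) (m : ℕ) :
    Ring.multichoose σ m * m.factorial = ∏ j ∈ Finset.range m, (σ + j) := by
  rw [mul_comm, ← nsmul_eq_mul, Ring.factorial_nsmul_multichoose_eq_ascPochhammer,
    Polynomial.ascPochhammer_smeval_eq_eval]
  induction m with
  | zero => simp
  | succ m ih => rw [ascPochhammer_succ_eval, ih, Finset.prod_range_succ]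

lemma multichoose_succ_mul (σ : ℝ) (m : ℕ) :
    Ring.multichoose σ (m + 1) * (m + 1) = Ring.multichoose σ m * (σ + m) := by
  have hsucc := multichoose_mul_factorial σ (m + 1)
  rw [Finset.prod_range_succ, ← multichoose_mul_factorial, Nat.factorial_succ] at hsucc
  push_cast at hsucc
  have hfac : (m.factorial : ℝ) ≠ 0 := by positivity
  exact mul_right_cancel₀ hfac (by linear_combination hsucc)

lemma multichoose_nonneg {σ : ℝ} (hσ : 0 ≤ σ) (m : ℕ) : 0 ≤ Ring.multichoose σ m := by
  refine nonneg_of_mul_nonneg_left (b := (m.factorial : ℝ)) ?_ (by positivity)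
  rw [multichoose_mul_factorial]
  exact Finset.prod_nonneg fun j _ => by positivity

lemma multichoose_neg_succ_nonpos {μ : ℝ} (hμ0 : 0 ≤ μ) (hμ1 : μ ≤ 1) (m : ℕ) :
    Ring.multichoose (-μ) (m + 1) ≤ 0 := by
  refine nonpos_of_mul_nonpos_left (b := ((m + 1).factorial : ℝ)) ?_ (by positivity)
  rw [multichoose_mul_factorial, Finset.prod_range_succ']
  refine mul_nonpos_of_nonneg_of_nonpos (Finset.prod_nonneg fun j _ => ?_) (by simpa using hμ0)
  have : (0 : ℝ) ≤ j := j.cast_nonneg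
  push_cast
  linarith

lemma multichoose_le_pow {σ : ℝ} (hσ : 0 ≤ σ) (m : ℕ) : Ring.multichoose σ m ≤ (σ + 1) ^ m := by
  induction m with
  | zero => simp
  | succ m ih =>
    have hfactor : (σ + m) / (m + 1) ≤ σ + 1 := by
      rw [div_le_iff₀ (by positivity)]
      nlinarith [mul_nonneg hσ m.cast_nonneg]
    calc Ring.multichoose σ (m + 1) = Ring.multichoose σ m * ((σ + m) / (m + 1)) := by
          rw [mul_div_assoc', ← multichoose_succ_mul, mul_div_cancel_right₀ _ (by positivity)]
      _ ≤ (σ + 1) ^ m * (σ + 1) := by gcongr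
      _ = (σ + 1) ^ (m + 1) := (pow_succ _ _).symm

lemma multichoose_add_one_mul (σ : ℝ) (m : ℕ) :
    Ring.multichoose (σ + 1) m * σ = Ring.multichoose σ (m + 1) * (m + 1) := by
  rw [multichoose_succ_mul]
  induction m with
  | zero => simp
  | succ m ih =>
    refine mul_right_cancel₀ (by positivity : (m : ℝ) + 1 ≠ 0) ?_
    push_cast
    linear_combination σ * multichoose_succ_mul (σ + 1) m + (σ + 1 + m) * ih
      - (σ + (m + 1)) * multichoose_succ_mul σ m

/-- Chu–Vandermonde, that is `(1 - X)^(-x) (1 - X)^(-y) = (1 - X)^(-(x + y))`. -/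
lemma sum_antidiagonal_multichoose_mul (x y : ℝ) (m : ℕ) :
    ∑ ij ∈ Finset.HasAntidiagonal.antidiagonal m,
      Ring.multichoose x ij.1 * Ring.multichoose y ij.2 = Ring.multichoose (x + y) m := by
  have hneg (r : ℝ) (n : ℕ) : Ring.multichoose r n = (-1) ^ n * Ring.choose (-r) n := by
    rw [Ring.choose_neg', Int.negOnePow_def, zpow_natCast, Units.smul_def, zsmul_eq_mul]
    push_cast
    rw [← mul_assoc, ← mul_pow, neg_one_mul, neg_neg, one_pow, one_mul]
  rw [hneg, neg_add, Ring.add_choose_eq m (Commute.all _ _), Finset.mul_sum]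
  refine Finset.sum_congr rfl fun ij hij => ?_
  rw [hneg, hneg, ← Finset.HasAntidiagonal.mem_antidiagonal.mp hij, pow_add]
  ring

lemma rpow_mul_multichoose_antitone {σ : ℝ} (hσ : 1 ≤ σ) {K m : ℕ} (hK : 1 ≤ K) (hm : K ≤ m) :
    (m : ℝ) ^ (1 - σ) * Ring.multichoose σ m ≤ (K : ℝ) ^ (1 - σ) * Ring.multichoose σ K := by
  induction m, hm using Nat.le_induction with
  | base => exact le_rfl
  | succ m hm ih =>
    refine le_trans ?_ ih
    have hm0 : (0 : ℝ) < m := by exact_mod_cast hK.trans hm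
    have hmc := multichoose_nonneg (zero_le_one.trans hσ) m
    have bernoulli : 1 + σ * (1 / m) ≤ (1 + 1 / (m : ℝ)) ^ σ :=
      one_add_mul_self_le_rpow_one_add (by linarith [one_div_pos.mpr hm0]) hσ
    have hbase : 1 + 1 / (m : ℝ) = (m + 1) / m := by field_simp
    rw [hbase, Real.div_rpow (by positivity) hm0.le] at bernoulli
    rw [Real.rpow_sub (by positivity), Real.rpow_sub hm0, Real.rpow_one, Real.rpow_one]
    push_cast
    calc ((m : ℝ) + 1) / (m + 1) ^ σ * Ring.multichoose σ (m + 1)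
        = Ring.multichoose σ m * m / (m + 1) ^ σ * (1 + σ * (1 / m)) := by
          field_simp
          linear_combination multichoose_succ_mul σ m
      _ ≤ Ring.multichoose σ m * m / (m + 1) ^ σ * ((m + 1) ^ σ / m ^ σ) := by gcongr
      _ = m / m ^ σ * Ring.multichoose σ m := by field_simp

lemma rpow_mul_multichoose_le {σ : ℝ} (hσ : 0 < σ) {K m : ℕ} (hK : 1 ≤ K) (hm : K ≤ m) :
    (m : ℝ) ^ (1 - σ) * Ring.multichoose σ m ≤
      (K + 1) * (K : ℝ) ^ (-σ) * Ring.multichoose σ (K + 1) := by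
  have hm0 : (0 : ℝ) < m := by exact_mod_cast hK.trans hm
  have hanti := rpow_mul_multichoose_antitone (by linarith : 1 ≤ σ + 1) hK hm
  rw [sub_add_cancel_right] at hanti
  have hshift : m * Ring.multichoose σ m ≤ Ring.multichoose (σ + 1) m * σ := by
    rw [multichoose_add_one_mul, multichoose_succ_mul]
    nlinarith [multichoose_nonneg hσ.le m]
  calc (m : ℝ) ^ (1 - σ) * Ring.multichoose σ m
      = (m : ℝ) ^ (-σ) * (m * Ring.multichoose σ m) := by
        rw [sub_eq_add_neg, Real.rpow_add hm0, Real.rpow_one]; ring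
    _ ≤ (m : ℝ) ^ (-σ) * Ring.multichoose (σ + 1) m * σ := by rw [mul_assoc]; gcongr
    _ ≤ (K : ℝ) ^ (-σ) * Ring.multichoose (σ + 1) K * σ := by gcongr
    _ = (K + 1) * (K : ℝ) ^ (-σ) * Ring.multichoose σ (K + 1) := by
        rw [mul_assoc, multichoose_add_one_mul]; ring

lemma tendsto_rpow_mul_multichoose {σ : ℝ} (hσ : 0 < σ) :
    Tendsto (fun m : ℕ => (m : ℝ) ^ (1 - σ) * Ring.multichoose σ m) atTop
      (𝓝 (Real.Gamma σ)⁻¹) := by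
  have heuler := (tendsto_natCast_div_add_atTop (𝕜 := ℝ) σ).mul
    ((Real.GammaSeq_tendsto_Gamma σ).inv₀ (Real.Gamma_pos_of_pos hσ).ne')
  rw [one_mul] at heuler
  refine heuler.congr' ?_
  filter_upwards [eventually_gt_atTop 0] with m hm
  have hm0 : (0 : ℝ) < m := by exact_mod_cast hm
  rw [Real.GammaSeq, Finset.prod_range_succ, ← multichoose_mul_factorial, Real.rpow_sub hm0,
    Real.rpow_one, add_comm σ]
  field_simp

lemma summable_pow_mul_multichoose {μ σ r : ℝ} (hμ : 0 ≤ μ) (hσ : 0 ≤ σ) (hr : |r| < 1) (m : ℕ) :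
    Summable fun j : ℕ => r ^ j * Ring.multichoose (σ + j * μ) m := by
  refine summable_of_isBigO_nat (summable_pow_mul_geometric_of_norm_lt_one m hr) ?_
  refine IsBigO.of_bound ((σ + μ + 1) ^ m) ?_
  filter_upwards [eventually_ge_atTop 1] with j hj
  have hj1 : (1 : ℝ) ≤ j := by exact_mod_cast hj
  have hpos : 0 ≤ σ + j * μ := by positivity
  have hlin : σ + j * μ + 1 ≤ (σ + μ + 1) * j := by nlinarith
  calc ‖r ^ j * Ring.multichoose (σ + j * μ) m‖ = Ring.multichoose (σ + j * μ) m * ‖r ^ j‖ := by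
        rw [norm_mul, Real.norm_of_nonneg (multichoose_nonneg hpos m), mul_comm]
    _ ≤ ((σ + μ + 1) * j) ^ m * ‖r ^ j‖ := by
        gcongr
        exact (multichoose_le_pow hpos m).trans (by gcongr)
    _ = (σ + μ + 1) ^ m * ‖(j : ℝ) ^ m * r ^ j‖ := by
        rw [norm_mul, Real.norm_of_nonneg (by positivity : (0 : ℝ) ≤ (j : ℝ) ^ m), mul_pow,
          mul_assoc]

end Multichoose

section DiscreteComparison

open Finset.HasAntidiagonal

/-- The coefficients of `(A - z)⁻¹ B` are dominated by those of `A⁻¹ B`: write the power series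
`A` as `1 - P` with `P ≥ 0` and use `|1 - z| ≥ 1`. -/
lemma norm_le_of_convolution_eq {c G B : ℕ → ℝ} {H : ℕ → ℂ} {z : ℂ} (hc0 : c 0 = 1)
    (hc : ∀ i, c (i + 1) ≤ 0) (hB : ∀ m, 0 ≤ B m) (hz : z.re ≤ 0)
    (hG : ∀ m, ∑ ij ∈ antidiagonal m, c ij.1 * G ij.2 = B m)
    (hH : ∀ m, ∑ ij ∈ antidiagonal m, (c ij.1 : ℂ) * H ij.2 = B m + z * H m) (m : ℕ) :
    ‖H m‖ ≤ G m := by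
  have hresolvent (x : ℂ) : ‖x‖ ≤ ‖(1 - z) * x‖ := by
    rw [norm_mul]
    have hre : 1 ≤ (1 - z).re := by simpa using hz
    exact le_mul_of_one_le_left (norm_nonneg x) (hre.trans (Complex.re_le_norm _))
  induction m using Nat.strong_induction_on with
  | _ m ih =>
    cases m with
    | zero =>
      have hG0 : G 0 = B 0 := by simpa [hc0] using hG 0
      have hH0 : (1 - z) * H 0 = B 0 := by
        have := hH 0
        simp only [Finset.Nat.antidiagonal_zero, Finset.sum_singleton, hc0, Complex.ofReal_one]
          at this
        linear_combination this
      calc ‖H 0‖ ≤ ‖(1 - z) * H 0‖ := hresolvent _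
        _ = G 0 := by rw [hH0, hG0, Complex.norm_of_nonneg (hB 0)]
    | succ m =>
      have hG' := hG (m + 1)
      have hH' := hH (m + 1)
      rw [Finset.Nat.sum_antidiagonal_succ] at hG' hH'
      simp only [hc0, Complex.ofReal_one, one_mul] at hG' hH'
      have hterm (ij) (hij : ij ∈ antidiagonal m) :
          ‖(c (ij.1 + 1) : ℂ) * H ij.2‖ ≤ -(c (ij.1 + 1) * G ij.2) := by
        have hlt : ij.2 < m + 1 := by have := mem_antidiagonal.mp hij; lia
        rw [norm_mul, Complex.norm_real, Real.norm_of_nonpos (hc _), ← neg_mul]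
        exact mul_le_mul_of_nonneg_left (ih _ hlt) (neg_nonneg.mpr (hc _))
      calc ‖H (m + 1)‖ ≤ ‖(1 - z) * H (m + 1)‖ := hresolvent _
        _ = ‖(B (m + 1) : ℂ) - ∑ ij ∈ antidiagonal m, (c (ij.1 + 1) : ℂ) * H ij.2‖ := by
          congr 1
          linear_combination hH'
        _ ≤ B (m + 1) + ∑ ij ∈ antidiagonal m, -(c (ij.1 + 1) * G ij.2) := by
          refine (norm_sub_le _ _).trans (add_le_add ?_ (norm_sum_le_of_le _ hterm))
          rw [Complex.norm_of_nonneg (hB _)]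
        _ = G (m + 1) := by
          rw [Finset.sum_neg_distrib]
          linear_combination -hG'

/-- The `m`-th coefficient of `∑ⱼ zʲ (1 - X)^(-(σ + j μ)) = (1 - X)^(μ - σ) / ((1 - X)^μ - z)`, a
discrete analogue of the Mittag-Leffler function. -/
noncomputable def discreteMittagLeffler (μ σ : ℝ) (z : ℂ) (m : ℕ) : ℂ :=
  ∑' j : ℕ, z ^ j * (Ring.multichoose (σ + j * μ) m : ℝ)

lemma summable_discreteMittagLeffler {μ σ : ℝ} {z : ℂ} (hμ : 0 ≤ μ) (hσ : 0 ≤ σ) (hz : ‖z‖ < 1)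
    (m : ℕ) : Summable fun j : ℕ => z ^ j * (Ring.multichoose (σ + j * μ) m : ℝ) := by
  refine .of_norm ((summable_pow_mul_multichoose (r := ‖z‖) hμ hσ (by simpa using hz) m).congr
    fun j => ?_)
  rw [norm_mul, norm_pow, Complex.norm_of_nonneg (multichoose_nonneg (by positivity) m)]

lemma sum_antidiagonal_multichoose_mul_discreteMittagLeffler {μ σ : ℝ} {z : ℂ} (hμ : 0 ≤ μ)
    (hσ : 0 ≤ σ) (hz : ‖z‖ < 1) (m : ℕ) :
    ∑ ij ∈ antidiagonal m, (Ring.multichoose (-μ) ij.1 : ℝ) * discreteMittagLeffler μ σ z ij.2 =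
      (Ring.multichoose (σ - μ) m : ℝ) + z * discreteMittagLeffler μ σ z m := by
  have hconv : HasSum (fun j : ℕ => z ^ j * (Ring.multichoose (σ - μ + j * μ) m : ℝ))
      (∑ ij ∈ antidiagonal m,
        (Ring.multichoose (-μ) ij.1 : ℝ) * discreteMittagLeffler μ σ z ij.2) := by
    refine (hasSum_sum fun ij _ =>
      (summable_discreteMittagLeffler hμ hσ hz ij.2).hasSum.mul_left _).congr_fun fun j => ?_
    rw [show σ - μ + j * μ = -μ + (σ + j * μ) by ring, ← sum_antidiagonal_multichoose_mul]
    push_cast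
    rw [Finset.mul_sum]
    exact Finset.sum_congr rfl fun ij _ => by ring
  rw [← hconv.tsum_eq, hconv.summable.tsum_eq_zero_add, discreteMittagLeffler, ← tsum_mul_left]
  congr 1
  · simp
  · refine tsum_congr fun j => ?_
    push_cast
    ring_nf

lemma norm_discreteMittagLeffler_le {μ σ : ℝ} {z : ℂ} (hμ0 : 0 ≤ μ) (hμ1 : μ ≤ 1) (hσ : μ ≤ σ)
    (hz : ‖z‖ < 1) (hre : z.re ≤ 0) (m : ℕ) :
    ‖discreteMittagLeffler μ σ z m‖ ≤ Ring.multichoose σ m := by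
  refine norm_le_of_convolution_eq (Ring.multichoose_zero_right _)
    (multichoose_neg_succ_nonpos hμ0 hμ1) (fun m => multichoose_nonneg (sub_nonneg.mpr hσ) m) hre
    (fun m => ?_) (sum_antidiagonal_multichoose_mul_discreteMittagLeffler hμ0 (hμ0.trans hσ) hz) m
  rw [sum_antidiagonal_multichoose_mul, neg_add_eq_sub]

end DiscreteComparison

section MittagLeffler

variable {A : Type*} [NormedRing A] [NormedAlgebra ℝ A] {α σ : ℝ}

/-- The two-parameter Mittag-Leffler function `E_{α,σ}(z) = ∑ⱼ zʲ / Γ(σ + j α)`; it is evaluated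
at real and at complex arguments. -/
noncomputable def mittagLeffler (α σ : ℝ) (z : A) : A :=
  ∑' j : ℕ, (Real.Gamma (σ + j * α))⁻¹ • z ^ j

lemma rpow_mul_multichoose_le_geometric {μ y : ℝ} (hμ : 0 < μ) (hσ : 0 < σ) (hy : 0 ≤ y)
    {K m : ℕ} (hK : 1 ≤ K) (hm : K ≤ m) (j : ℕ) :
    (m : ℝ) ^ (1 - σ) * ((y / (m : ℝ) ^ μ) ^ j * Ring.multichoose (σ + j * μ) m) ≤
      (K + 1) * (K : ℝ) ^ (-σ) *
        ((y / (K : ℝ) ^ μ) ^ j * Ring.multichoose (σ + j * μ) (K + 1)) := by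
  have hsplit {n : ℕ} (hn : 1 ≤ n) (s : ℝ) :
      (n : ℝ) ^ s / ((n : ℝ) ^ μ) ^ j = (n : ℝ) ^ (s - j * μ) := by
    rw [Real.rpow_sub (by exact_mod_cast hn), mul_comm (j : ℝ), Real.rpow_mul_natCast n.cast_nonneg]
  calc (m : ℝ) ^ (1 - σ) * ((y / (m : ℝ) ^ μ) ^ j * Ring.multichoose (σ + j * μ) m)
      = y ^ j * ((m : ℝ) ^ (1 - (σ + j * μ)) * Ring.multichoose (σ + j * μ) m) := by
        rw [sub_add_eq_sub_sub, ← hsplit (hK.trans hm), div_pow]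
        ring
    _ ≤ y ^ j * ((K + 1) * (K : ℝ) ^ (-(σ + j * μ)) * Ring.multichoose (σ + j * μ) (K + 1)) :=
        mul_le_mul_of_nonneg_left (rpow_mul_multichoose_le (by positivity) hK hm) (pow_nonneg hy j)
    _ = (K + 1) * (K : ℝ) ^ (-σ) *
          ((y / (K : ℝ) ^ μ) ^ j * Ring.multichoose (σ + j * μ) (K + 1)) := by
        rw [neg_add', ← hsplit hK, div_pow]
        ring

lemma exists_nat_lt_rpow {μ : ℝ} (hμ : 0 < μ) (y : ℝ) : ∃ K : ℕ, 1 ≤ K ∧ y < (K : ℝ) ^ μ :=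
  ((eventually_ge_atTop 1).and (((tendsto_rpow_atTop hμ).comp
    tendsto_natCast_atTop_atTop).eventually_gt_atTop y)).exists

lemma summable_rpow_mul_multichoose {μ y : ℝ} (hμ : 0 ≤ μ) (hσ : 0 ≤ σ) (hy : 0 ≤ y) {K : ℕ}
    (hyK : y < (K : ℝ) ^ μ) : Summable fun j : ℕ =>
      (K + 1) * (K : ℝ) ^ (-σ) *
        ((y / (K : ℝ) ^ μ) ^ j * Ring.multichoose (σ + j * μ) (K + 1)) := by
  refine (summable_pow_mul_multichoose hμ hσ ?_ _).mul_left _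
  rw [abs_of_nonneg (div_nonneg hy (hy.trans hyK.le)), div_lt_one (hy.trans_lt hyK)]
  exact hyK

lemma tendsto_rpow_mul_multichoose_mittagLeffler_term (hα : 0 ≤ α) (hσ : 0 < σ) (z : A) (j : ℕ) :
    Tendsto (fun m : ℕ => ((m : ℝ) ^ (1 - σ) * (((m : ℝ) ^ α)⁻¹ ^ j *
      Ring.multichoose (σ + j * α) m)) • z ^ j) atTop
      (𝓝 ((Real.Gamma (σ + j * α))⁻¹ • z ^ j)) := by
  refine ((tendsto_rpow_mul_multichoose (by positivity : 0 < σ + j * α)).congr' ?_).smul_const _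
  filter_upwards [eventually_gt_atTop 0] with m hm
  have hm0 : (0 : ℝ) < m := by exact_mod_cast hm
  rw [sub_add_eq_sub_sub, Real.rpow_sub hm0 _ (j * α), mul_comm (j : ℝ) α,
    Real.rpow_mul_natCast hm0.le]
  ring

lemma summable_norm_mittagLeffler (hα : 0 < α) (hσ : 0 < σ) (z : A) :
    Summable fun j : ℕ => ‖(Real.Gamma (σ + j * α))⁻¹ • z ^ j‖ := by
  obtain ⟨K, hK, hzK⟩ := exists_nat_lt_rpow hα ‖z‖
  refine (summable_rpow_mul_multichoose hα.le hσ.le (norm_nonneg z)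
    hzK).of_norm_bounded_eventually_nat ?_
  filter_upwards [eventually_ge_atTop 1] with j hj
  rw [norm_norm]
  refine le_of_tendsto (tendsto_rpow_mul_multichoose_mittagLeffler_term hα.le hσ z j).norm ?_
  filter_upwards [eventually_ge_atTop K] with m hm
  refine le_trans ?_ (rpow_mul_multichoose_le_geometric hα hσ (norm_nonneg z) hK hm j)
  have hmc := multichoose_nonneg (by positivity : 0 ≤ σ + j * α) m
  rw [norm_smul, Real.norm_of_nonneg (by positivity), div_eq_mul_inv, mul_pow, mul_assoc,
    mul_assoc, mul_comm (‖z‖ ^ j), ← mul_assoc, ← mul_assoc, ← mul_assoc]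
  refine (mul_le_mul_of_nonneg_left (norm_pow_le' z hj) (by positivity)).trans_eq ?_
  ring

lemma mittagLeffler_ofReal (x : ℝ) :
    mittagLeffler α σ (x : ℂ) = (mittagLeffler α σ x : ℝ) := by
  rw [mittagLeffler, mittagLeffler, Complex.ofReal_tsum]
  exact tsum_congr fun j => by simp

variable [CompleteSpace A]

lemma hasSum_mittagLeffler (hα : 0 < α) (hσ : 0 < σ) (z : A) :
    HasSum (fun j : ℕ => (Real.Gamma (σ + j * α))⁻¹ • z ^ j) (mittagLeffler α σ z) :=
  (summable_norm_mittagLeffler hα hσ z).of_norm.hasSum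

lemma mittagLeffler_eq_add (hα : 0 < α) (hσ : 0 < σ) (z : A) :
    mittagLeffler α σ z = (Real.Gamma σ)⁻¹ • 1 + z * mittagLeffler α (σ + α) z := by
  rw [mittagLeffler, (hasSum_mittagLeffler hα hσ z).summable.tsum_eq_zero_add,
    mittagLeffler, ← (hasSum_mittagLeffler hα (by positivity) z).summable.tsum_mul_left]
  congr 1
  · simp
  · refine tsum_congr fun j => ?_
    rw [mul_smul_comm, pow_succ', Nat.cast_add_one, show σ + (j + 1) * α = σ + α + j * α by ring]

lemma mittagLeffler_duplication (hα : 0 < α) (hσ : 0 < σ) (z : A) :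
    mittagLeffler α σ z =
      mittagLeffler (2 * α) σ (z ^ 2) + z * mittagLeffler (2 * α) (σ + α) (z ^ 2) := by
  have heven := hasSum_mittagLeffler (by positivity : 0 < 2 * α) hσ (z ^ 2)
  have hodd := (hasSum_mittagLeffler (by positivity : 0 < 2 * α) (by positivity : 0 < σ + α)
    (z ^ 2)).mul_left z
  refine (HasSum.even_add_odd (f := fun j : ℕ => (Real.Gamma (σ + j * α))⁻¹ • z ^ j)
    (heven.congr_fun fun j => ?_) (hodd.congr_fun fun j => ?_)).tsum_eq
  · push_cast
    rw [← pow_mul, mul_assoc, mul_left_comm]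
  · push_cast
    rw [mul_smul_comm, ← pow_mul, ← pow_succ',
      show σ + (2 * j + 1) * α = σ + α + j * (2 * α) by ring]

lemma tendsto_discreteMittagLeffler (hα : 0 < α) (hσ : 0 < σ) (z : ℂ) :
    Tendsto (fun m : ℕ => ((m : ℝ) ^ (1 - σ) : ℝ) *
      discreteMittagLeffler α σ (z / ((m : ℝ) ^ α : ℝ)) m) atTop (𝓝 (mittagLeffler α σ z)) := by
  obtain ⟨K, hK, hzK⟩ := exists_nat_lt_rpow hα ‖z‖
  simp only [discreteMittagLeffler, ← tsum_mul_left]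
  refine tendsto_tsum_of_dominated_convergence
    (summable_rpow_mul_multichoose hα.le hσ.le (norm_nonneg z) hzK) (fun j => ?_) ?_
  · refine (tendsto_rpow_mul_multichoose_mittagLeffler_term hα.le hσ z j).congr fun m => ?_
    rw [Complex.real_smul]
    push_cast
    ring
  · filter_upwards [eventually_ge_atTop K] with m hm j
    refine Eq.trans_le ?_ (rpow_mul_multichoose_le_geometric hα hσ (norm_nonneg z) hK hm j)
    have hmc := multichoose_nonneg (by positivity : 0 ≤ σ + j * α) m
    rw [norm_mul, norm_mul, norm_pow, norm_div, Complex.norm_of_nonneg hmc,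
      Complex.norm_of_nonneg (by positivity), Complex.norm_of_nonneg (by positivity)]

lemma norm_mittagLeffler_le (hα0 : 0 < α) (hα1 : α ≤ 1) (hσ : α ≤ σ) {z : ℂ} (hz : z.re ≤ 0) :
    ‖mittagLeffler α σ z‖ ≤ (Real.Gamma σ)⁻¹ := by
  have hσ0 : 0 < σ := hα0.trans_le hσ
  obtain ⟨K, hK, hzK⟩ := exists_nat_lt_rpow hα0 ‖z‖
  refine le_of_tendsto_of_tendsto (tendsto_discreteMittagLeffler hα0 hσ0 z).norm
    (tendsto_rpow_mul_multichoose hσ0) ?_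
  filter_upwards [eventually_ge_atTop K] with m hm
  have hm0 : (0 : ℝ) < (m : ℝ) ^ α := Real.rpow_pos_of_pos (by exact_mod_cast hK.trans hm) _
  have hzm : ‖z‖ < (m : ℝ) ^ α := hzK.trans_le (by gcongr)
  rw [norm_mul, Complex.norm_of_nonneg (by positivity)]
  gcongr
  refine norm_discreteMittagLeffler_le hα0.le hα1 hσ ?_ ?_ m
  · rwa [norm_div, Complex.norm_of_nonneg hm0.le, div_lt_one hm0]
  · rw [Complex.div_ofReal_re]
    exact div_nonpos_of_nonpos_of_nonneg hz hm0.le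

end MittagLeffler

section NegativeArgument

variable {α σ x : ℝ}

/-- The real and imaginary parts of `E_{α/2,σ}(i √x)` are `E_{α,σ}(-x)` and
`√x E_{α,σ+α/2}(-x)`. -/
lemma mittagLeffler_sqrt_mul_I (hα : 0 < α) (hσ : 0 < σ) (hx : 0 ≤ x) :
    mittagLeffler (α / 2) σ (√x * Complex.I) =
      (mittagLeffler α σ (-x) : ℝ) + (√x * mittagLeffler α (σ + α / 2) (-x) : ℝ) * Complex.I := by
  have hsq : ((√x : ℂ) * Complex.I) ^ 2 = (-x : ℝ) := by
    rw [mul_pow, Complex.I_sq, ← Complex.ofReal_pow, Real.sq_sqrt hx]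
    simp
  rw [mittagLeffler_duplication (half_pos hα) hσ, hsq, mul_div_cancel₀ _ (two_ne_zero' ℝ),
    mittagLeffler_ofReal, mittagLeffler_ofReal]
  push_cast
  ring

lemma abs_mittagLeffler_neg_le (hα0 : 0 < α) (hα2 : α ≤ 2) (hσ : α / 2 ≤ σ) (hx : 0 ≤ x) :
    |mittagLeffler α σ (-x)| ≤ (Real.Gamma σ)⁻¹ := by
  have hre : (mittagLeffler (α / 2) σ (√x * Complex.I)).re = mittagLeffler α σ (-x) := by
    rw [mittagLeffler_sqrt_mul_I hα0 (by linarith) hx]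
    simp
  rw [← hre]
  exact (Complex.abs_re_le_norm _).trans
    (norm_mittagLeffler_le (by linarith) (by linarith) hσ (by simp))

lemma sqrt_mul_abs_mittagLeffler_neg_le (hα0 : 0 < α) (hα2 : α ≤ 2) (hσ : α ≤ σ) (hx : 0 ≤ x) :
    √x * |mittagLeffler α σ (-x)| ≤ (Real.Gamma (σ - α / 2))⁻¹ := by
  have him : (mittagLeffler (α / 2) (σ - α / 2) (√x * Complex.I)).im =
      √x * mittagLeffler α σ (-x) := by
    rw [mittagLeffler_sqrt_mul_I hα0 (by linarith) hx]
    simp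
  nth_rw 1 [← abs_of_nonneg (Real.sqrt_nonneg x)]
  rw [← abs_mul, ← him]
  exact (Complex.abs_im_le_norm _).trans
    (norm_mittagLeffler_le (by linarith) (by linarith) (by linarith) (by simp))

lemma mittagLeffler_neg_nonneg (hα0 : 0 < α) (hα2 : α ≤ 2) (hσ : 3 * α / 2 ≤ σ) (hx : 0 ≤ x) :
    0 ≤ mittagLeffler α σ (-x) := by
  have hσ0 : 0 < σ - α := by linarith
  have hbound := (le_abs_self _).trans
    (abs_mittagLeffler_neg_le (σ := σ - α) hα0 hα2 (by linarith) hx)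
  rw [mittagLeffler_eq_add hα0 hσ0, sub_add_cancel, smul_eq_mul, mul_one] at hbound
  rcases hx.eq_or_lt with rfl | hx0
  · rw [mittagLeffler_eq_add hα0 (by linarith), smul_eq_mul, mul_one, neg_zero, zero_mul, add_zero]
    exact inv_nonneg.mpr (Real.Gamma_pos_of_pos (by linarith)).le
  · exact nonneg_of_mul_nonneg_right (by linarith : 0 ≤ x * _) hx0

end NegativeArgument

section RiemannLiouville

lemma integral_rpow_mul_rpow {σ τ t : ℝ} (hσ : 0 < σ) (hτ : 0 < τ) (ht : 0 < t) :
    ∫ s in (0 : ℝ)..t, (t - s) ^ (σ - 1) * s ^ (τ - 1) =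
      Real.Gamma σ * Real.Gamma τ / Real.Gamma (σ + τ) * t ^ (σ + τ - 1) := by
  have hbeta := Complex.betaIntegral_scaled (τ : ℂ) (σ : ℂ) ht
  rw [Complex.betaIntegral_eq_Gamma_mul_div _ _ (by simpa) (by simpa)] at hbeta
  have hcast : ∫ s in (0 : ℝ)..t, (s : ℂ) ^ ((τ : ℂ) - 1) * ((t : ℂ) - s) ^ ((σ : ℂ) - 1) =
      ∫ s in (0 : ℝ)..t, (((t - s) ^ (σ - 1) * s ^ (τ - 1) : ℝ) : ℂ) := by
    refine intervalIntegral.integral_congr fun s hs => ?_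
    rw [uIcc_of_le ht.le] at hs
    rw [Complex.ofReal_mul, Complex.ofReal_cpow (sub_nonneg.mpr hs.2), Complex.ofReal_cpow hs.1]
    push_cast
    ring
  rw [hcast, intervalIntegral.integral_ofReal,
    show (τ : ℂ) + σ - 1 = ((σ + τ - 1 : ℝ) : ℂ) by push_cast; ring, ← Complex.ofReal_cpow ht.le,
    ← Complex.ofReal_add, Complex.Gamma_ofReal, Complex.Gamma_ofReal, Complex.Gamma_ofReal,
    add_comm τ σ] at hbeta
  apply Complex.ofReal_injective
  rw [hbeta]
  push_cast
  ring

lemma integral_sub_rpow_mul_sub_rpow {σ τ r t : ℝ} (hσ : 0 < σ) (hτ : 0 < τ) (hrt : r < t) :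
    ∫ s in r..t, (t - s) ^ (σ - 1) * (s - r) ^ (τ - 1) =
      Real.Gamma σ * Real.Gamma τ / Real.Gamma (σ + τ) * (t - r) ^ (σ + τ - 1) := by
  rw [← integral_rpow_mul_rpow hσ hτ (sub_pos.mpr hrt), ← sub_self r,
    ← intervalIntegral.integral_comp_sub_right (a := r) (b := t)
      (fun s => (t - r - s) ^ (σ - 1) * s ^ (τ - 1)) r]
  simp only [sub_sub_sub_cancel_right]

lemma intervalIntegrable_sub_rpow_mul_sub_rpow {σ τ r t : ℝ} (hσ : 0 < σ) (hτ : 0 < τ)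
    (hrt : r < t) :
    IntervalIntegrable (fun s => (t - s) ^ (σ - 1) * (s - r) ^ (τ - 1)) volume r t := by
  refine intervalIntegral.intervalIntegrable_of_integral_ne_zero ?_
  rw [integral_sub_rpow_mul_sub_rpow hσ hτ hrt]
  exact (mul_pos (by positivity) (Real.rpow_pos_of_pos (sub_pos.mpr hrt) _)).ne'

/-- `f` is integrable against the kernel of the Riemann–Liouville integral of order `σ` with upper
limit `t`; otherwise `rlInt σ f t` has the junk value `0`. -/
def RLIntegrable (σ : ℝ) (f : ℝ → ℝ) (t : ℝ) : Prop :=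
  IntervalIntegrable (fun s => (t - s) ^ (σ - 1) * f s) volume 0 t

variable {σ τ t : ℝ} {f g : ℝ → ℝ}

lemma RLIntegrable.of_continuous (hσ : 0 < σ) (hf : Continuous f) (t : ℝ) :
    RLIntegrable σ f t := by
  refine IntervalIntegrable.mul_continuousOn ?_ hf.continuousOn
  simpa using (intervalIntegral.intervalIntegrable_rpow' (a := t) (b := 0)
    (by linarith : -1 < σ - 1)).comp_sub_left t

lemma RLIntegrable.of_intervalIntegrable (hσ : 1 ≤ σ) (hf : IntervalIntegrable f volume 0 t) :
    RLIntegrable σ f t :=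
  hf.continuousOn_mul ((continuous_const.sub continuous_id).rpow_const
    fun _ => Or.inr (sub_nonneg.mpr hσ)).continuousOn

lemma RLIntegrable.of_rpow (hσ : 0 < σ) (hτ : 0 < τ) (ht : 0 < t) :
    RLIntegrable σ (fun s => s ^ (τ - 1)) t := by
  simpa only [RLIntegrable, sub_zero] using intervalIntegrable_sub_rpow_mul_sub_rpow hσ hτ ht

lemma RLIntegrable.const_mul (hf : RLIntegrable σ f t) (c : ℝ) :
    RLIntegrable σ (fun s => c * f s) t := by
  simpa only [RLIntegrable, mul_left_comm] using IntervalIntegrable.const_mul hf c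

lemma RLIntegrable.add (hf : RLIntegrable σ f t) (hg : RLIntegrable σ g t) :
    RLIntegrable σ (fun s => f s + g s) t := by
  simpa only [RLIntegrable, mul_add] using IntervalIntegrable.add hf hg

lemma ae_restrict_Ioc_mem_Ioo (t : ℝ) : ∀ᵐ s ∂volume.restrict (Ioc 0 t), s ∈ Ioo 0 t := by
  rw [← restrict_Ioo_eq_restrict_Ioc]
  exact ae_restrict_mem measurableSet_Ioo

lemma RLIntegrable.aestronglyMeasurable (hf : RLIntegrable σ f t) :
    AEStronglyMeasurable f (volume.restrict (Ioc 0 t)) := by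
  have hkernel : AEStronglyMeasurable (fun s => (t - s) ^ (1 - σ)) (volume.restrict (Ioc 0 t)) :=
    (by fun_prop : Measurable fun s : ℝ => (t - s) ^ (1 - σ)).aestronglyMeasurable
  refine (hkernel.mul (IntervalIntegrable.aestronglyMeasurable hf)).congr ?_
  filter_upwards [ae_restrict_Ioc_mem_Ioo t] with s hs
  rw [Pi.mul_apply, ← mul_assoc, ← Real.rpow_add (sub_pos.mpr hs.2), sub_add_sub_cancel',
    sub_self, Real.rpow_zero, one_mul]

lemma RLIntegrable.mono (hf : RLIntegrable σ f t) (ht : 0 ≤ t) (hστ : σ ≤ τ) :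
    RLIntegrable τ f t := by
  have hpow : Continuous fun s : ℝ => (t - s) ^ (τ - σ) :=
    (continuous_const.sub continuous_id).rpow_const fun _ => Or.inr (sub_nonneg.mpr hστ)
  refine (IntervalIntegrable.continuousOn_mul hf hpow.continuousOn).congr_ae ?_
  rw [uIoc_of_le ht]
  filter_upwards [ae_restrict_Ioc_mem_Ioo t] with s hs
  rw [← mul_assoc, ← Real.rpow_add (sub_pos.mpr hs.2), sub_add_sub_cancel]

lemma rlInt_congr_ae (ht : 0 ≤ t) (h : f =ᵐ[volume.restrict (Ioc 0 t)] g) :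
    rlInt σ f t = rlInt σ g t := by
  rw [rlInt, rlInt, intervalIntegral.integral_of_le ht, intervalIntegral.integral_of_le ht]
  congr 1
  refine integral_congr_ae ?_
  filter_upwards [h] with s hs
  rw [hs]

lemma rlInt_add (hf : RLIntegrable σ f t) (hg : RLIntegrable σ g t) :
    rlInt σ (fun s => f s + g s) t = rlInt σ f t + rlInt σ g t := by
  simp only [rlInt, mul_add]
  rw [intervalIntegral.integral_add hf hg, mul_add]

lemma rlInt_const_mul (σ c : ℝ) (f : ℝ → ℝ) (t : ℝ) :
    rlInt σ (fun s => c * f s) t = c * rlInt σ f t := by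
  simp only [rlInt, mul_left_comm _ c, intervalIntegral.integral_const_mul]

lemma rlInt_one (f : ℝ → ℝ) (t : ℝ) : rlInt 1 f t = ∫ s in (0 : ℝ)..t, f s := by
  simp [rlInt]

lemma rlInt_zero_right (σ : ℝ) (f : ℝ → ℝ) : rlInt σ f 0 = 0 := by simp [rlInt]

lemma rlInt_rpow (hσ : 0 < σ) (hτ : 0 < τ) (ht : 0 < t) :
    rlInt σ (fun s => s ^ (τ - 1)) t = Real.Gamma τ * t ^ (σ + τ - 1) / Real.Gamma (σ + τ) := by
  rw [rlInt, integral_rpow_mul_rpow hσ hτ ht]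
  field_simp

lemma rlInt_nonneg (hσ : 0 < σ) (ht : 0 ≤ t) (hf : ∀ s ∈ Icc 0 t, 0 ≤ f s) :
    0 ≤ rlInt σ f t := by
  refine mul_nonneg (by positivity) (intervalIntegral.integral_nonneg ht fun s hs => ?_)
  exact mul_nonneg (Real.rpow_nonneg (sub_nonneg.mpr hs.2) _) (hf s hs)

lemma abs_rlInt_le (hσ : 0 < σ) (ht : 0 ≤ t) (hg : RLIntegrable σ g t)
    (h : ∀ s ∈ Ioc 0 t, |f s| ≤ g s) : |rlInt σ f t| ≤ rlInt σ g t := by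
  rw [rlInt, rlInt, abs_mul, abs_of_pos (by positivity : 0 < 1 / Real.Gamma σ)]
  gcongr
  rw [← Real.norm_eq_abs]
  refine intervalIntegral.norm_integral_le_of_norm_le ht (ae_of_all _ fun s hs => ?_) hg
  rw [norm_mul, Real.norm_of_nonneg (Real.rpow_nonneg (sub_nonneg.mpr hs.2) _)]
  exact mul_le_mul_of_nonneg_left (h s hs)
    (Real.rpow_nonneg (sub_nonneg.mpr hs.2) _)

/-- The integrand, supported on the triangle `r < s`, whose two iterated integrals are
`I^σ I^τ f (t)` and `I^(σ+τ) f (t)` up to Gamma factors. -/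
noncomputable def triangleKernel (σ τ : ℝ) (f : ℝ → ℝ) (t : ℝ) : ℝ × ℝ → ℝ :=
  {p | p.2 < p.1}.indicator fun p => (t - p.1) ^ (σ - 1) * (p.1 - p.2) ^ (τ - 1) * f p.2

lemma aestronglyMeasurable_triangleKernel
    (hf : AEStronglyMeasurable f (volume.restrict (Ioc 0 t))) :
    AEStronglyMeasurable (triangleKernel σ τ f t)
      ((volume.restrict (Ioc 0 t)).prod (volume.restrict (Ioc 0 t))) := by
  refine AEStronglyMeasurable.indicator (.mul ?_ hf.comp_snd)
    (measurableSet_lt measurable_snd measurable_fst)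
  exact (by fun_prop : Measurable fun p : ℝ × ℝ =>
    (t - p.1) ^ (σ - 1) * (p.1 - p.2) ^ (τ - 1)).aestronglyMeasurable

lemma triangleKernel_eq_indicator_Ioi (r : ℝ) : (fun s => triangleKernel σ τ f t (s, r)) =
    (Ioi r).indicator fun s => (t - s) ^ (σ - 1) * (s - r) ^ (τ - 1) * f r := rfl

lemma integrableOn_triangleKernel_left (hσ : 0 < σ) (hτ : 0 < τ) {r : ℝ} (hr : 0 ≤ r)
    (hrt : r < t) : IntegrableOn (fun s => triangleKernel σ τ f t (s, r)) (Ioc 0 t) := by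
  rw [triangleKernel_eq_indicator_Ioi, IntegrableOn, integrable_indicator_iff measurableSet_Ioi,
    IntegrableOn, Measure.restrict_restrict measurableSet_Ioi, inter_comm, Ioc_inter_Ioi,
    sup_of_le_right hr]
  exact ((intervalIntegrable_iff_integrableOn_Ioc_of_le hrt.le).mp
    (intervalIntegrable_sub_rpow_mul_sub_rpow hσ hτ hrt)).mul_const _

lemma integral_triangleKernel_left (hσ : 0 < σ) (hτ : 0 < τ) {r : ℝ} (hr : 0 ≤ r) (hrt : r < t) :
    ∫ s in Ioc 0 t, triangleKernel σ τ f t (s, r) =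
      Real.Gamma σ * Real.Gamma τ / Real.Gamma (σ + τ) * ((t - r) ^ (σ + τ - 1) * f r) := by
  rw [triangleKernel_eq_indicator_Ioi, setIntegral_indicator measurableSet_Ioi, Ioc_inter_Ioi,
    sup_of_le_right hr, ← intervalIntegral.integral_of_le hrt.le,
    intervalIntegral.integral_mul_const, integral_sub_rpow_mul_sub_rpow hσ hτ hrt, mul_assoc]

lemma integral_triangleKernel_right (hτ : 0 < τ) {s : ℝ} (hs : s ∈ Ioc 0 t) :
    ∫ r in Ioc 0 t, triangleKernel σ τ f t (s, r) =
      Real.Gamma τ * ((t - s) ^ (σ - 1) * rlInt τ f s) := by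
  have hslice : (fun r => triangleKernel σ τ f t (s, r)) =
      (Iio s).indicator fun r => (t - s) ^ (σ - 1) * ((s - r) ^ (τ - 1) * f r) := by
    simp only [← mul_assoc]
    rfl
  have hinter : Ioc 0 t ∩ Iio s = Ioo 0 s := by
    ext r
    exact ⟨fun h => ⟨h.1.1, h.2⟩, fun h => ⟨⟨h.1, h.2.le.trans hs.2⟩, h.2⟩⟩
  have hΓ := (Real.Gamma_pos_of_pos hτ).ne'
  rw [hslice, setIntegral_indicator measurableSet_Iio, hinter, ← integral_Ioc_eq_integral_Ioo,
    ← intervalIntegral.integral_of_le hs.1.le, intervalIntegral.integral_const_mul, rlInt]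
  field_simp

lemma integrable_triangleKernel (hσ : 0 < σ) (hτ : 0 < τ) (ht : 0 ≤ t)
    (hf : RLIntegrable (σ + τ) f t) : Integrable (triangleKernel σ τ f t)
      ((volume.restrict (Ioc 0 t)).prod (volume.restrict (Ioc 0 t))) := by
  refine (integrable_prod_iff'
    (aestronglyMeasurable_triangleKernel hf.aestronglyMeasurable)).mpr ⟨?_, ?_⟩
  · filter_upwards [ae_restrict_Ioc_mem_Ioo t] with r hr
    exact integrableOn_triangleKernel_left hσ hτ hr.1.le hr.2
  · have hf' := ((intervalIntegrable_iff_integrableOn_Ioc_of_le ht).mp hf).norm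
    refine (hf'.const_mul (Real.Gamma σ * Real.Gamma τ / Real.Gamma (σ + τ))).congr ?_
    filter_upwards [ae_restrict_Ioc_mem_Ioo t] with r hr
    rw [norm_mul, Real.norm_of_nonneg (Real.rpow_nonneg (sub_nonneg.mpr hr.2.le) _),
      ← integral_triangleKernel_left (f := fun r => ‖f r‖) hσ hτ hr.1.le hr.2]
    refine setIntegral_congr_fun measurableSet_Ioc fun s hs => ?_
    rw [triangleKernel, triangleKernel, norm_indicator_eq_indicator_norm]
    by_cases hrs : (s, r) ∈ {p : ℝ × ℝ | p.2 < p.1}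
    · have hts := Real.rpow_nonneg (sub_nonneg.mpr hs.2) (σ - 1)
      have hsr := Real.rpow_nonneg (sub_nonneg.mpr (show r < s from hrs).le) (τ - 1)
      rw [indicator_of_mem hrs, indicator_of_mem hrs, norm_mul, norm_mul,
        Real.norm_of_nonneg hts, Real.norm_of_nonneg hsr]
    · rw [indicator_of_notMem hrs, indicator_of_notMem hrs]

lemma RLIntegrable.rlInt (hσ : 0 < σ) (hτ : 0 < τ) (ht : 0 ≤ t)
    (hf : RLIntegrable (σ + τ) f t) : RLIntegrable σ (rlInt τ f) t := by
  refine (intervalIntegrable_iff_integrableOn_Ioc_of_le ht).mpr ?_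
  refine ((integrable_triangleKernel hσ hτ ht hf).integral_prod_left.const_mul
    (Real.Gamma τ)⁻¹).congr ?_
  filter_upwards [ae_restrict_mem measurableSet_Ioc] with s hs
  rw [integral_triangleKernel_right hτ hs,
    inv_mul_cancel_left₀ (Real.Gamma_pos_of_pos hτ).ne']

lemma rlInt_rlInt (hσ : 0 < σ) (hτ : 0 < τ) (ht : 0 ≤ t) (hf : RLIntegrable (σ + τ) f t) :
    rlInt σ (rlInt τ f) t = rlInt (σ + τ) f t := by
  have hswap := integral_integral_swap (f := fun s r => triangleKernel σ τ f t (s, r))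
    (integrable_triangleKernel hσ hτ ht hf)
  have hleft : ∫ s in Ioc 0 t, ∫ r in Ioc 0 t, triangleKernel σ τ f t (s, r) =
      Real.Gamma τ * (Real.Gamma σ * rlInt σ (rlInt τ f) t) := by
    rw [setIntegral_congr_fun measurableSet_Ioc fun s hs => integral_triangleKernel_right hτ hs,
      integral_const_mul, ← intervalIntegral.integral_of_le ht, rlInt, ← mul_assoc (Real.Gamma σ),
      mul_one_div_cancel (Real.Gamma_pos_of_pos hσ).ne', one_mul]
  have hright : ∫ r in Ioc 0 t, ∫ s in Ioc 0 t, triangleKernel σ τ f t (s, r) =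
      Real.Gamma σ * Real.Gamma τ * rlInt (σ + τ) f t := by
    rw [rlInt, ← mul_assoc, mul_one_div, intervalIntegral.integral_of_le ht, ← integral_const_mul]
    refine integral_congr_ae ?_
    filter_upwards [ae_restrict_Ioc_mem_Ioo t] with r hr
    exact integral_triangleKernel_left hσ hτ hr.1.le hr.2
  refine mul_left_cancel₀ (mul_pos (Real.Gamma_pos_of_pos hσ) (Real.Gamma_pos_of_pos hτ)).ne' ?_
  linear_combination hleft.symm.trans (hswap.trans hright)

end RiemannLiouville

section MittagLefflerIntegral

/-- Convolution with the Mittag-Leffler kernel `s^(ρ-1) E_{α,ρ}(c s^α)`, that is the operator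
`I^ρ (1 - c I^α)⁻¹` (see `hasSum_mlInt`). -/
noncomputable def mlInt (α ρ c : ℝ) (f : ℝ → ℝ) (t : ℝ) : ℝ :=
  ∫ s in (0 : ℝ)..t, mittagLeffler α ρ (c * (t - s) ^ α) * ((t - s) ^ (ρ - 1) * f s)

variable {α ρ c t : ℝ} {f g : ℝ → ℝ}

lemma pow_mul_rlInt_add_mul (ht : 0 ≤ t) (j : ℕ) :
    c ^ j * rlInt (ρ + j * α) f t = ∫ s in (0 : ℝ)..t,
      (Real.Gamma (ρ + j * α))⁻¹ * (c * (t - s) ^ α) ^ j * ((t - s) ^ (ρ - 1) * f s) := by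
  rw [rlInt, ← mul_assoc, ← intervalIntegral.integral_const_mul,
    intervalIntegral.integral_of_le ht, intervalIntegral.integral_of_le ht]
  refine integral_congr_ae ?_
  filter_upwards [ae_restrict_Ioc_mem_Ioo t] with s hs
  have hts := sub_pos.mpr hs.2
  rw [mul_pow, ← Real.rpow_mul_natCast hts.le,
    show ρ + j * α - 1 = α * j + (ρ - 1) by ring, Real.rpow_add hts]
  ring

lemma hasSum_mlInt (hα : 0 < α) (hρ : 0 < ρ) (ht : 0 ≤ t) (hf : RLIntegrable ρ f t) :
    HasSum (fun j : ℕ => c ^ j * rlInt (ρ + j * α) f t) (mlInt α ρ c f t) := by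
  have hE (z : ℝ) : HasSum (fun j : ℕ => (Real.Gamma (ρ + j * α))⁻¹ * z ^ j)
      (mittagLeffler α ρ z) := by
    simpa only [smul_eq_mul] using hasSum_mittagLeffler hα hρ z
  simp only [pow_mul_rlInt_add_mul ht]
  refine intervalIntegral.hasSum_integral_of_dominated_convergence
    (fun j s => ‖(Real.Gamma (ρ + j * α))⁻¹ * (|c| * t ^ α) ^ j‖ * ‖(t - s) ^ (ρ - 1) * f s‖)
    (fun j => ?_) (fun j => ae_of_all _ fun s hs => ?_)
    (ae_of_all _ fun s _ => (hE (|c| * t ^ α)).summable.norm.mul_right _) ?_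
    (ae_of_all _ fun s _ => (hE (c * (t - s) ^ α)).mul_right _)
  · exact (by fun_prop : Measurable fun s : ℝ => (Real.Gamma (ρ + j * α))⁻¹ *
      (c * (t - s) ^ α) ^ j).aestronglyMeasurable.mul (intervalIntegrable_iff.mp hf).1
  · rw [uIoc_of_le ht] at hs
    have hts := sub_nonneg.mpr hs.2
    rw [norm_mul, norm_mul, norm_mul _ ((|c| * t ^ α) ^ j), norm_pow, norm_pow, norm_mul c,
      norm_mul |c|, Real.norm_eq_abs c, Real.norm_of_nonneg (abs_nonneg c),
      Real.norm_of_nonneg (Real.rpow_nonneg ht α), Real.norm_of_nonneg (Real.rpow_nonneg hts α)]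
    gcongr
    exact sub_le_self t hs.1.le
  · simp only [tsum_mul_right]
    exact (IntervalIntegrable.norm hf).const_mul _

lemma mlInt_congr_ae (ht : 0 ≤ t) (h : f =ᵐ[volume.restrict (Ioc 0 t)] g) :
    mlInt α ρ c f t = mlInt α ρ c g t := by
  rw [mlInt, mlInt, intervalIntegral.integral_of_le ht, intervalIntegral.integral_of_le ht]
  refine integral_congr_ae ?_
  filter_upwards [h] with s hs
  rw [hs]

lemma mlInt_add (hα : 0 < α) (hρ : 0 < ρ) (ht : 0 ≤ t) (hf : RLIntegrable ρ f t)
    (hg : RLIntegrable ρ g t) :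
    mlInt α ρ c (fun s => f s + g s) t = mlInt α ρ c f t + mlInt α ρ c g t := by
  refine (hasSum_mlInt hα hρ ht (hf.add hg)).unique
    (((hasSum_mlInt hα hρ ht hf).add (hasSum_mlInt hα hρ ht hg)).congr_fun fun j => ?_)
  have hj : ρ ≤ ρ + j * α := le_add_of_nonneg_right (by positivity)
  rw [rlInt_add (hf.mono ht hj) (hg.mono ht hj), mul_add]

lemma mlInt_const_mul (α ρ c : ℝ) (b : ℝ) (f : ℝ → ℝ) (t : ℝ) :
    mlInt α ρ c (fun s => b * f s) t = b * mlInt α ρ c f t := by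
  simp only [mlInt, mul_left_comm _ b, intervalIntegral.integral_const_mul]

lemma mlInt_eq_rlInt_add (hα : 0 < α) (hρ : 0 < ρ) (ht : 0 ≤ t) (hf : RLIntegrable ρ f t) :
    mlInt α ρ c f t = rlInt ρ f t + c * mlInt α (ρ + α) c f t := by
  have hf' := hf.mono ht (le_add_of_nonneg_right hα.le)
  rw [← (hasSum_mlInt hα hρ ht hf).tsum_eq, (hasSum_mlInt hα hρ ht hf).summable.tsum_eq_zero_add,
    ← (hasSum_mlInt hα (by positivity) ht hf').tsum_eq, ← tsum_mul_left]
  congr 1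
  · simp
  · refine tsum_congr fun j => ?_
    rw [pow_succ', mul_assoc, Nat.cast_add_one, show ρ + (j + 1) * α = ρ + α + j * α by ring]

lemma mlInt_rlInt (hα : 0 < α) (hρ : 0 < ρ) {σ : ℝ} (hσ : 0 < σ) (ht : 0 ≤ t)
    (hf : RLIntegrable (ρ + σ) f t) :
    mlInt α ρ c (rlInt σ f) t = mlInt α (ρ + σ) c f t := by
  refine (hasSum_mlInt hα hρ ht (hf.rlInt hρ hσ ht)).unique
    ((hasSum_mlInt hα (by positivity) ht hf).congr_fun fun j => ?_)
  have hj : ρ + σ ≤ ρ + j * α + σ := by linarith [(by positivity : 0 ≤ j * α)]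
  rw [rlInt_rlInt (by positivity) hσ ht (hf.mono ht hj), add_right_comm]

lemma mlInt_rpow (hα : 0 < α) (hρ : 0 < ρ) {τ : ℝ} (hτ : 0 < τ) (ht : 0 < t) :
    mlInt α ρ c (fun s => s ^ (τ - 1)) t =
      Real.Gamma τ * (t ^ (ρ + τ - 1) * mittagLeffler α (ρ + τ) (c * t ^ α)) := by
  refine (hasSum_mlInt hα hρ ht.le (.of_rpow hρ hτ ht)).unique
    ((((hasSum_mittagLeffler hα (by positivity) (c * t ^ α)).mul_left
      (t ^ (ρ + τ - 1))).mul_left (Real.Gamma τ)).congr_fun fun j => ?_)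
  rw [rlInt_rpow (by positivity) hτ ht, smul_eq_mul, mul_pow, ← Real.rpow_mul_natCast ht.le,
    add_right_comm ρ, show ρ + τ + j * α - 1 = ρ + τ - 1 + α * j by ring, Real.rpow_add ht]
  ring

lemma mlInt_nonneg {a : ℝ} (hα0 : 0 < α) (hα2 : α ≤ 2) (hρ : 3 * α / 2 ≤ ρ) (ha : 0 ≤ a)
    (ht : 0 ≤ t) (hf : ∀ᵐ s ∂volume.restrict (Ioc 0 t), 0 ≤ f s) : 0 ≤ mlInt α ρ (-a) f t := by
  rw [mlInt, intervalIntegral.integral_of_le ht]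
  refine integral_nonneg_of_ae ?_
  filter_upwards [hf, ae_restrict_mem measurableSet_Ioc] with s hs hst
  have hts := sub_nonneg.mpr hst.2
  rw [neg_mul]
  exact mul_nonneg (mittagLeffler_neg_nonneg hα0 hα2 hρ (by positivity)) (by positivity)

/-- Variation of constants for the equation `w = φ + I^α h`. -/
lemma rlInt_eq_mlInt_add_mlInt (hα : 0 < α) (hρ : 0 < ρ) (ht : 0 ≤ t) {w φ h : ℝ → ℝ}
    (hw : RLIntegrable ρ w t) (hφ : RLIntegrable ρ φ t) (hh : RLIntegrable (ρ + α) h t)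
    (hwh : w =ᵐ[volume.restrict (Ioc 0 t)] fun s => φ s + rlInt α h s) :
    rlInt ρ w t = mlInt α ρ c φ t + mlInt α (ρ + α) c (fun s => h s + -c * w s) t := by
  have hrec := mlInt_eq_rlInt_add (c := c) hα hρ ht hw
  rw [mlInt_congr_ae ht hwh, mlInt_add hα hρ ht hφ (hh.rlInt hρ hα ht),
    mlInt_rlInt hα hρ hα ht hh] at hrec
  rw [mlInt_add hα (by positivity) ht hh ((hw.mono ht (by linarith)).const_mul _), mlInt_const_mul]
  linear_combination -hrec

/-- The Mittag-Leffler kernel is tested against `s^(τ-1) - 1 ≥ 0` on `(0, 1]`. -/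
lemma mittagLeffler_add_one_neg_le {τ x : ℝ} (hα0 : 0 < α) (hα2 : α ≤ 2) (hρ : 3 * α / 2 ≤ ρ)
    (hτ0 : 0 < τ) (hτ1 : τ ≤ 1) (hx : 0 ≤ x) :
    mittagLeffler α (ρ + 1) (-x) ≤ Real.Gamma τ * mittagLeffler α (ρ + τ) (-x) := by
  have hρ0 : 0 < ρ := by linarith
  have hnonneg : 0 ≤ mlInt α ρ (-x) (fun s => s ^ (τ - 1) + -1 * s ^ ((1 : ℝ) - 1)) 1 := by
    refine mlInt_nonneg hα0 hα2 hρ hx zero_le_one ?_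
    filter_upwards [ae_restrict_mem measurableSet_Ioc] with s hs
    rw [sub_self, Real.rpow_zero, mul_one, ← sub_eq_add_neg, sub_nonneg]
    exact Real.one_le_rpow_of_pos_of_le_one_of_nonpos hs.1 hs.2 (by linarith)
  rw [mlInt_add hα0 hρ0 zero_le_one (.of_rpow hρ0 hτ0 one_pos)
    ((RLIntegrable.of_rpow hρ0 one_pos one_pos).const_mul _), mlInt_const_mul,
    mlInt_rpow hα0 hρ0 hτ0 one_pos, mlInt_rpow hα0 hρ0 one_pos one_pos] at hnonneg
  simp only [Real.one_rpow, mul_one, one_mul, Real.Gamma_one] at hnonneg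
  linarith

end MittagLefflerIntegral

section CaputoInversion

variable {σ τ α t : ℝ} {f g w : ℝ → ℝ}

lemma isBigO_rlInt (hσ : 0 < σ) (hτ : 0 < τ) (hf : f =O[𝓝[>] 0] fun s => s ^ (τ - 1)) :
    rlInt σ f =O[𝓝[>] 0] fun t => t ^ (σ + τ - 1) := by
  obtain ⟨C, hC⟩ := hf.bound
  obtain ⟨δ, hδ, hfδ⟩ := mem_nhdsGT_iff_exists_Ioo_subset.mp hC
  refine IsBigO.of_bound (C * Real.Gamma τ / Real.Gamma (σ + τ)) ?_
  filter_upwards [Ioo_mem_nhdsGT hδ] with t ht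
  have hle : ∀ s ∈ Ioc 0 t, |f s| ≤ C * s ^ (τ - 1) := fun s hs => by
    have hs' : ‖f s‖ ≤ C * ‖s ^ (τ - 1)‖ := hfδ ⟨hs.1, hs.2.trans_lt ht.2⟩
    rwa [Real.norm_of_nonneg (Real.rpow_nonneg hs.1.le _)] at hs'
  have hrl := abs_rlInt_le hσ ht.1.le ((RLIntegrable.of_rpow hσ hτ ht.1).const_mul C) hle
  rw [rlInt_const_mul, rlInt_rpow hσ hτ ht.1] at hrl
  rw [Real.norm_of_nonneg (Real.rpow_nonneg ht.1.le _), Real.norm_eq_abs]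
  exact hrl.trans_eq (by ring)

lemma hasDerivWithinAt_rlInt_zero (hσ : 0 < σ) (hτ : 0 < τ) (hστ : 2 < σ + τ)
    (hf : f =O[𝓝[>] 0] fun s => s ^ (τ - 1)) : HasDerivWithinAt (rlInt σ f) 0 (Ioi 0) 0 := by
  rw [hasDerivWithinAt_iff_isLittleO]
  simp only [rlInt_zero_right, sub_zero, smul_zero]
  refine (isBigO_rlInt hσ hτ hf).trans_isLittleO ?_
  have hpow : Tendsto (fun t : ℝ => t ^ (σ + τ - 2)) (𝓝[>] 0) (𝓝 0) := by
    have hcont := (Real.continuousAt_rpow_const 0 (σ + τ - 2) (Or.inr (by linarith))).tendsto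
    rw [Real.zero_rpow (by linarith)] at hcont
    exact hcont.mono_left nhdsWithin_le_nhds
  refine (((isLittleO_one_iff ℝ).mpr hpow).mul_isBigO (isBigO_refl id _)).congr' ?_ ?_
  · filter_upwards [self_mem_nhdsWithin] with t ht
    rw [id, ← Real.rpow_add_one (ne_of_gt ht)]
    ring_nf
  · exact .of_forall fun t => one_mul t

lemma AC2On.mono {s : ℝ} (hg : AC2On g t) (hs : s ∈ Icc 0 t) : AC2On g s := by
  have hsub : Icc 0 s ⊆ Icc 0 t := Icc_subset_Icc_right hs.2
  refine ⟨fun r hr => hg.1 r (hsub hr), hg.2.1.mono_set ?_, fun r hr => hg.2.2 r (hsub hr)⟩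
  rwa [uIcc_of_le hs.1, uIcc_of_le (hs.1.trans hs.2)]

lemma AC2On.eq_add_rlInt_two (hg : AC2On g t) (ht : 0 ≤ t) :
    g t = g 0 + deriv g 0 * t + rlInt 2 (deriv (deriv g)) t := by
  obtain ⟨hdiff, hint, hderiv⟩ := hg
  have hcont : ContinuousOn (deriv g) (Icc 0 t) := by
    refine (continuousOn_const.add ?_).congr hderiv
    simpa only [uIcc_of_le ht] using
      intervalIntegral.continuousOn_primitive_interval' hint left_mem_uIcc
  rw [← uIcc_of_le ht] at hcont hdiff
  have hftc := intervalIntegral.integral_deriv_eq_sub hdiff hcont.intervalIntegrable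
  have hcomp := rlInt_rlInt one_pos one_pos ht
    (RLIntegrable.of_intervalIntegrable (by norm_num) hint)
  have hrl : rlInt 1 (rlInt 1 (deriv (deriv g))) t =
      ∫ s in (0 : ℝ)..t, (deriv g s - deriv g 0) := by
    rw [rlInt_one]
    refine intervalIntegral.integral_congr fun s hs => ?_
    rw [uIcc_of_le ht] at hs
    rw [rlInt_one, hderiv s hs, add_sub_cancel_left]
  rw [← one_add_one_eq_two, ← hcomp, hrl, intervalIntegral.integral_sub hcont.intervalIntegrable
    intervalIntegrable_const, hftc, intervalIntegral.integral_const, smul_eq_mul]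
  ring

lemma ae_eq_of_integral_eq (ht : 0 ≤ t) (hf : IntervalIntegrable f volume 0 t)
    (hg : IntervalIntegrable g volume 0 t)
    (h : ∀ s ∈ Icc 0 t, ∫ r in (0 : ℝ)..s, f r = ∫ r in (0 : ℝ)..s, g r) :
    f =ᵐ[volume.restrict (Ioc 0 t)] g := by
  filter_upwards [ae_restrict_of_ae hf.ae_hasDerivAt_integral,
    ae_restrict_of_ae hg.ae_hasDerivAt_integral, ae_restrict_Ioc_mem_Ioo t] with s hfs hgs hs
  rw [uIcc_of_le ht] at hfs hgs
  have h0 : (0 : ℝ) ∈ Icc 0 t := ⟨le_rfl, ht⟩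
  refine (hfs (Ioo_subset_Icc_self hs) 0 h0).unique
    ((hgs (Ioo_subset_Icc_self hs) 0 h0).congr_of_eventuallyEq ?_)
  filter_upwards [Icc_mem_nhds hs.1 hs.2] with r hr using h r hr

lemma ae_eq_of_rlInt_eq (hσ0 : 0 < σ) (hσ1 : σ < 1) (ht : 0 ≤ t)
    (hf : IntervalIntegrable f volume 0 t) (hg : IntervalIntegrable g volume 0 t)
    (h : ∀ s ∈ Icc 0 t, rlInt σ f s = rlInt σ g s) : f =ᵐ[volume.restrict (Ioc 0 t)] g := by
  have hprimitive {k : ℝ → ℝ} (hk : IntervalIntegrable k volume 0 t) {s : ℝ} (hs : s ∈ Icc 0 t) :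
      ∫ r in (0 : ℝ)..s, k r = rlInt (1 - σ) (rlInt σ k) s := by
    have hks : RLIntegrable 1 k s := .of_intervalIntegrable le_rfl (hk.mono_set (by
      rw [uIcc_of_le hs.1, uIcc_of_le ht]
      exact Icc_subset_Icc_right hs.2))
    rw [← rlInt_one, rlInt_rlInt (sub_pos.mpr hσ1) hσ0 hs.1 (by rwa [sub_add_cancel]),
      sub_add_cancel]
  refine ae_eq_of_integral_eq ht hf hg fun s hs => ?_
  rw [hprimitive hf hs, hprimitive hg hs]
  refine rlInt_congr_ae hs.1 ?_
  filter_upwards [ae_restrict_mem measurableSet_Ioc] with r hr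
  exact h r ⟨hr.1.le, hr.2.trans hs.2⟩

lemma capKernel_of_lt_two (hα2 : α < 2) (w : ℝ → ℝ) :
    capKernel α w = rlInt (2 - α) fun s => w s - deriv w 0 * s - w 0 :=
  if_neg hα2.ne

lemma deriv_capKernel_zero (hα2 : α < 2) (hw : DifferentiableAt ℝ w 0)
    (hdiff : DifferentiableAt ℝ (capKernel α w) 0) : deriv (capKernel α w) 0 = 0 := by
  have hremainder : (fun s => w s - deriv w 0 * s - w 0) =O[𝓝[>] 0]
      fun s : ℝ => s ^ ((2 : ℝ) - 1) := by
    have hsub : DifferentiableAt ℝ (fun s => w s - deriv w 0 * s) 0 := by fun_prop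
    refine (hsub.isBigO_sub.mono nhdsWithin_le_nhds).congr (fun s => ?_) fun s => ?_
    · rw [mul_zero, sub_zero]
    · norm_num
  have hzero := hasDerivWithinAt_rlInt_zero (sub_pos.mpr hα2) two_pos (by linarith) hremainder
  rw [← capKernel_of_lt_two hα2] at hzero
  exact (uniqueDiffWithinAt_Ioi 0).eq_deriv _ hdiff.hasDerivAt.hasDerivWithinAt hzero

lemma ae_eq_add_rlInt_caputoD (hα1 : 1 < α) (hα2 : α < 2) (ht : 0 ≤ t) (hw : Continuous w)
    (hw0 : DifferentiableAt ℝ w 0) (hAC : AC2On (capKernel α w) t) :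
    w =ᵐ[volume.restrict (Ioc 0 t)]
      fun s => w 0 + deriv w 0 * s + rlInt α (caputoD α w) s := by
  have hα0 : 0 < α := by linarith
  have hσ := sub_pos.mpr hα2
  have hrl (s : ℝ) (hs : s ∈ Icc 0 t) : rlInt (2 - α) (fun s => w s - deriv w 0 * s - w 0) s =
      rlInt (2 - α) (rlInt α (caputoD α w)) s := by
    have hACs := hAC.mono hs
    rw [rlInt_rlInt (f := caputoD α w) hσ hα0 hs.1 (.of_intervalIntegrable (by linarith) hACs.2.1),
      sub_add_cancel, ← capKernel_of_lt_two hα2, hACs.eq_add_rlInt_two hs.1,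
      deriv_capKernel_zero hα2 hw0 (hAC.1 0 ⟨le_rfl, ht⟩), capKernel_of_lt_two hα2,
      rlInt_zero_right, zero_mul, zero_add, zero_add, caputoD, capKernel_of_lt_two hα2]
  have hint : IntervalIntegrable (rlInt α (caputoD α w)) volume 0 t := by
    have h1 : RLIntegrable 1 (rlInt α (caputoD α w)) t :=
      (RLIntegrable.of_intervalIntegrable (by linarith) hAC.2.1).rlInt one_pos hα0 ht
    simpa only [RLIntegrable, sub_self, Real.rpow_zero, one_mul] using h1
  have hae := ae_eq_of_rlInt_eq hσ (by linarith) ht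
    (Continuous.intervalIntegrable (by fun_prop) 0 t) hint hrl
  filter_upwards [hae] with s hs
  rw [← hs]
  ring

end CaputoInversion

section Asymptotics

variable {α β σ a t : ℝ} {w : ℝ → ℝ}

lemma tendsto_rpow_mul_mittagLeffler_neg {r : ℝ} (hα0 : 0 < α) (hα2 : α ≤ 2) (hσ : α ≤ σ)
    (ha : 0 < a) (hr : r < α / 2) :
    Tendsto (fun t : ℝ => t ^ r * mittagLeffler α σ (-(a * t ^ α))) atTop (𝓝 0) := by
  have hdecay : Tendsto (fun t : ℝ => (√a)⁻¹ * (Real.Gamma (σ - α / 2))⁻¹ * t ^ (-(α / 2 - r)))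
      atTop (𝓝 0) := by
    simpa only [mul_zero] using
      (tendsto_rpow_neg_atTop (sub_pos.mpr hr)).const_mul ((√a)⁻¹ * (Real.Gamma (σ - α / 2))⁻¹)
  refine squeeze_zero_norm' ?_ hdecay
  filter_upwards [eventually_gt_atTop 0] with t ht
  have hE := sqrt_mul_abs_mittagLeffler_neg_le hα0 hα2 hσ (by positivity : 0 ≤ a * t ^ α)
  rw [Real.sqrt_mul ha.le, Real.sqrt_eq_rpow (t ^ α), ← Real.rpow_mul ht.le,
    mul_one_div] at hE
  have hE' := (le_inv_mul_iff₀ (by positivity)).mpr hE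
  rw [norm_mul, Real.norm_of_nonneg (by positivity), Real.norm_eq_abs]
  calc t ^ r * |mittagLeffler α σ (-(a * t ^ α))|
      ≤ t ^ r * ((√a * t ^ (α / 2))⁻¹ * (Real.Gamma (σ - α / 2))⁻¹) := by gcongr
    _ = (√a)⁻¹ * (Real.Gamma (σ - α / 2))⁻¹ * (t ^ r * t ^ (-(α / 2))) := by
      rw [Real.rpow_neg ht.le]
      ring
    _ = (√a)⁻¹ * (Real.Gamma (σ - α / 2))⁻¹ * t ^ (-(α / 2 - r)) := by
      rw [← Real.rpow_add ht, neg_sub, ← sub_eq_add_neg]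

lemma inv_Gamma_sub_mittagLeffler_le {x : ℝ} (hα1 : 1 ≤ α) (hα2 : α < 2) (hβ : α / 2 ≤ β)
    (hx : 0 ≤ x) : (Real.Gamma (β + 1))⁻¹ - mittagLeffler α (β + 1) (-x) ≤
      Real.Gamma (2 - α) * (x * mittagLeffler α (β + 2) (-x)) := by
  have htest := mittagLeffler_add_one_neg_le (ρ := β + α) (τ := 2 - α) (by linarith) hα2.le
    (by linarith) (by linarith) (by linarith) hx
  have hrec := mittagLeffler_eq_add (α := α) (σ := β + 1) (by linarith) (by linarith) (-x)
  rw [show β + α + (2 - α) = β + 2 by ring, add_right_comm] at htest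
  rw [smul_eq_mul, mul_one] at hrec
  linarith [mul_le_mul_of_nonneg_left htest hx]

lemma le_rlInt_of_caputoD_add_mul_nonneg (hα1 : 1 < α) (hα2 : α < 2) (ha : 0 ≤ a)
    (hβ : α / 2 ≤ β) (ht : 0 < t) (hw : Continuous w) (hw0 : DifferentiableAt ℝ w 0)
    (hAC : AC2On (capKernel α w) t)
    (hineq : ∀ᵐ s ∂volume.restrict (Ioc 0 t), 0 ≤ caputoD α w s + a * w s) :
    w 0 * (t ^ β * mittagLeffler α (β + 1) (-(a * t ^ α))) +
      deriv w 0 * (t ^ (β + 1) * mittagLeffler α (β + 2) (-(a * t ^ α))) ≤ rlInt β w t := by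
  have hα0 : 0 < α := by linarith
  have hβ0 : 0 < β := by linarith
  have hφ (τ : ℝ) (hτ : 0 < τ) := RLIntegrable.of_rpow (σ := β) hβ0 hτ ht
  have hvoc := rlInt_eq_mlInt_add_mlInt (c := -a) hα0 hβ0 ht.le (.of_continuous hβ0 hw t)
    (((hφ 1 one_pos).const_mul (w 0)).add ((hφ 2 two_pos).const_mul (deriv w 0)))
    (.of_intervalIntegrable (by linarith) hAC.2.1)
    (h := caputoD α w) (by
      filter_upwards [ae_eq_add_rlInt_caputoD hα1 hα2 ht.le hw hw0 hAC] with s hs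
      norm_num
      exact hs)
  have hnonneg := mlInt_nonneg (ρ := β + α) hα0 hα2.le (by linarith) ha ht.le hineq
  rw [mlInt_add hα0 hβ0 ht.le ((hφ 1 one_pos).const_mul _) ((hφ 2 two_pos).const_mul _),
    mlInt_const_mul, mlInt_const_mul, mlInt_rpow hα0 hβ0 one_pos ht,
    mlInt_rpow hα0 hβ0 two_pos ht, Real.Gamma_one, Real.Gamma_two, one_mul, one_mul,
    add_sub_cancel_right, show β + 2 - 1 = β + 1 by ring, neg_mul, neg_neg] at hvoc
  linarith

lemma le_rpow_mul_rlInt_of_caputoD_add_mul_nonneg (hα1 : 1 < α) (hα2 : α < 2) (ha : 0 < a)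
    (hβ : α / 2 ≤ β) (ht : 0 < t) (hw : Continuous w) (hw' : 0 < deriv w 0)
    (hAC : AC2On (capKernel α w) t)
    (hineq : ∀ᵐ s ∂volume.restrict (Ioc 0 t), 0 ≤ caputoD α w s + a * w s) :
    w 0 * (t ^ (α - 1) * mittagLeffler α (β + 1) (-(a * t ^ α))) +
      deriv w 0 / (a * Real.Gamma (2 - α)) *
        ((Real.Gamma (β + 1))⁻¹ - mittagLeffler α (β + 1) (-(a * t ^ α))) ≤
      t ^ (α - β - 1) * rlInt β w t := by
  have hlower := le_rlInt_of_caputoD_add_mul_nonneg hα1 hα2 ha.le hβ ht hw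
    (differentiableAt_of_deriv_ne_zero hw'.ne') hAC hineq
  have htest := inv_Gamma_sub_mittagLeffler_le hα1.le hα2 hβ (by positivity : 0 ≤ a * t ^ α)
  have hΓ := Real.Gamma_pos_of_pos (sub_pos.mpr hα2)
  set E₁ := mittagLeffler α (β + 1) (-(a * t ^ α))
  set E₂ := mittagLeffler α (β + 2) (-(a * t ^ α))
  calc w 0 * (t ^ (α - 1) * E₁) +
        deriv w 0 / (a * Real.Gamma (2 - α)) * ((Real.Gamma (β + 1))⁻¹ - E₁)
      ≤ w 0 * (t ^ (α - 1) * E₁) +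
        deriv w 0 / (a * Real.Gamma (2 - α)) * (Real.Gamma (2 - α) * (a * t ^ α * E₂)) :=
      add_le_add_right (mul_le_mul_of_nonneg_left htest (by positivity)) _
    _ = w 0 * (t ^ (α - 1) * E₁) + deriv w 0 * (t ^ α * E₂) := by field_simp
    _ = t ^ (α - β - 1) * (w 0 * (t ^ β * E₁) + deriv w 0 * (t ^ (β + 1) * E₂)) := by
      rw [show α - 1 = α - β - 1 + β by ring, Real.rpow_add ht,
        show t ^ α = t ^ (α - β - 1) * t ^ (β + 1) by rw [← Real.rpow_add ht]; ring_nf]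
      ring
    _ ≤ t ^ (α - β - 1) * rlInt β w t := by gcongr

end Asymptotics

theorem cor_liminf_pos_iv_general {α a β : ℝ} {w : ℝ → ℝ} (hα1 : 1 < α) (hα2 : α < 2)
    (ha : 0 < a) (hβ : α / 2 ≤ β) (hw : Continuous w) (hw' : 0 < deriv w 0)
    (hAC : ∀ T > 0, AC2On (capKernel α w) T)
    (hineq : ∀ᵐ t ∂volume.restrict (Ici 0), 0 ≤ caputoD α w t + a * w t) :
    0 < liminf (fun t : ℝ => ((t ^ (α - β - 1) * rlInt β w t : ℝ) : EReal)) atTop := by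
  have hα0 : 0 < α := by linarith
  set ℓ := deriv w 0 / (a * Real.Gamma (2 - α)) * (Real.Gamma (β + 1))⁻¹ with hℓ
  have hℓ_pos : 0 < ℓ :=
    mul_pos (div_pos hw' (mul_pos ha (Real.Gamma_pos_of_pos (sub_pos.mpr hα2))))
      (inv_pos.mpr (Real.Gamma_pos_of_pos (by linarith)))
  have hdecay {r : ℝ} (hr : r < α / 2) := tendsto_rpow_mul_mittagLeffler_neg (σ := β + 1)
    hα0 hα2.le (by linarith) ha hr
  have hlim := ((hdecay (by linarith : α - 1 < α / 2)).const_mul (w 0)).add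
    (((hdecay (half_pos hα0)).const_sub (Real.Gamma (β + 1))⁻¹).const_mul
      (deriv w 0 / (a * Real.Gamma (2 - α))))
  simp only [Real.rpow_zero, one_mul, mul_zero, zero_add, sub_zero, ← hℓ] at hlim
  refine (EReal.coe_pos.mpr hℓ_pos).trans_le ((EReal.tendsto_coe.mpr hlim).liminf_eq.ge.trans
    (liminf_le_liminf ?_))
  filter_upwards [eventually_gt_atTop 0] with t ht
  exact EReal.coe_le_coe (le_rpow_mul_rlInt_of_caputoD_add_mul_nonneg hα1 hα2 ha hβ ht hw hw'
    (hAC t ht) (ae_restrict_of_ae_restrict_of_subset (fun s hs => hs.1.le) hineq))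

/-- Corollary 2.5 (iv): for β ∈ [α/2, α), if α+γ ≤ 2 and w'(0) > 0 then liminf t^{α−β−1} (₀I_t^β w)(t) > 0. -/
theorem cor_liminf_pos_iv
    (γ α p a b : ℝ) (w : ℝ → ℝ)
    (hγ : 0 < γ) (hα1 : 1 < α) (hα2 : α < 2) (hp : 1 < p) (ha : 0 < a) (hb : 0 < b)
    (hw : ContDiff ℝ 1 w)
    (hw0 : ∃ t : ℝ, 0 ≤ t ∧ w t ≠ 0)
    (hAC : ∀ T > (0:ℝ), AC2On (capKernel α w) T)
    (hineq : ∀ᵐ t ∂(volume.restrict (Set.Ici (0:ℝ))),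
      caputoD α w t + a * w t ≥ b * rlInt γ (fun s => |w s| ^ p) t)
    (β : ℝ) (hβ1 : α / 2 ≤ β) (hβ2 : β < α) (hαγ : α + γ ≤ 2) (hw' : 0 < deriv w 0) :
    0 < liminf (fun t : ℝ => ((t ^ (α - β - 1) * rlInt β w t : ℝ) : EReal)) atTop := by
  refine cor_liminf_pos_iv_general hα1 hα2 ha hβ1 hw.continuous hw' hAC ?_
  filter_upwards [hineq, ae_restrict_mem measurableSet_Ici] with t hineq_t ht
  exact (mul_nonneg hb.le (rlInt_nonneg hγ ht fun s _ => by positivity)).trans hineq_t
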